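/- Let k be a field, n ≥ 1, and let K be the fraction field of the formal power series ring k[[x_1, …, x_n]]. Suppose v and w are valuations on K with values in ℝ≥0 such that v and w are at most 1 on (the image in K of) every element of k[[x_1, …, x_n]], v(x_i) = w(x_i) for all i, and the common values c_i = v(x_i) satisfy 0 < c_i < 1 and are multiplicatively rationally independent. Then v = w. -/

import Mathlib

/-!
A valuation `u ≤ 1` on `k[[x₁, …, xₙ]]` with `u xᵢ = cᵢ > 0` is forced to be monomial: `u f` is the
largest `c ^ d = ∏ i, cᵢ ^ dᵢ` over the exponents `d` in the support of `f`.

By Dickson's lemma every set `S` of exponents has finitely many minimal elements, and each element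
of `S` lies above one of them. Since `cᵢ ≤ 1`, the maximum of `c ^ d` over the support exists; since
the `cᵢ` are independent, it is attained at exactly one exponent `m`. Applying Dickson's lemma to
the support with `m` removed writes `f - aₘ x ^ m` as a *finite* sum of terms `x ^ b * g_b` with
`c ^ b < c ^ m`, so `u (f - aₘ x ^ m) < c ^ m` (`valuation_lt_of_forall_le`), with no continuity
of `u` required. As nonzero constants have value `1`, `u f = c ^ m`. The exponent `m` depends only
on `f` and `c`, so two such valuations agree on power series, hence on fractions.
-/

open MvPowerSeries in
/-- The value of a monomial with coefficient `1`. -/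
lemma valuation_monomial_one {k : Type*} [Field k] {n : ℕ}
    (u : Valuation (MvPowerSeries (Fin n) k) NNReal) (d : Fin n →₀ ℕ) :
    u (monomial d 1) = ∏ i, u (X i) ^ d i := by
  rw [monomial_one_eq, Finsupp.prod_fintype _ _ (by simp), map_prod]
  simp

open MvPowerSeries in
/-- Nonzero constants are units, so they have value `1`. -/
lemma valuation_C {k : Type*} [Field k] {n : ℕ}
    (u : Valuation (MvPowerSeries (Fin n) k) NNReal) (hu : ∀ f, u f ≤ 1) {a : k} (ha : a ≠ 0) :
    u (C a) = 1 := by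
  refine le_antisymm (hu _) ?_
  have h : u (C a) * u (C a⁻¹) = 1 := by
    rw [← map_mul, ← map_mul, mul_inv_cancel₀ ha, map_one, map_one]
  calc (1 : NNReal) = u (C a) * u (C a⁻¹) := h.symm
    _ ≤ u (C a) * 1 := by gcongr; exact hu _
    _ = u (C a) := mul_one _

open MvPowerSeries in
/-- A power series supported above finitely many exponents `b ∈ B` is a finite sum of multiples of
the monomials `x ^ b`, so its value is below any strict bound for the values of these. -/
lemma valuation_lt_of_forall_le {k : Type*} [Field k] {n : ℕ}
    (u : Valuation (MvPowerSeries (Fin n) k) NNReal) (hu : ∀ f, u f ≤ 1) {r : NNReal} (hr : 0 < r)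
    (B : Finset (Fin n →₀ ℕ)) (hB : ∀ b ∈ B, u (monomial b 1) < r)
    (f : MvPowerSeries (Fin n) k) (hf : ∀ d, coeff d f ≠ 0 → ∃ b ∈ B, b ≤ d) : u f < r := by
  classical
  induction B using Finset.induction_on generalizing f with
  | empty =>
    have : f = 0 := by
      ext d
      by_contra h
      simpa using hf d h
    simpa [this] using hr
  | insert b B _ ih =>
    -- `g` collects the terms of `f` divisible by `x ^ b`, after division by `x ^ b`.
    let g : MvPowerSeries (Fin n) k := fun d => coeff (d + b) f
    have hg : ∀ d, coeff d g = coeff (d + b) f := fun _ => rfl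
    have hc : ∀ d, coeff d (monomial b 1 * g) = if b ≤ d then coeff d f else 0 := by
      intro d
      rw [coeff_monomial_mul]
      split_ifs with h
      · rw [hg, one_mul, tsub_add_cancel_of_le h]
      · rfl
    have h1 : u (monomial b 1 * g) < r := by
      rw [map_mul]
      exact (mul_le_of_le_one_right' (hu g)).trans_lt (hB b (Finset.mem_insert_self _ _))
    have h2 : u (f - monomial b 1 * g) < r := by
      refine ih (fun b' hb' => hB b' (Finset.mem_insert_of_mem hb')) _ fun d hd => ?_
      rw [map_sub, hc] at hd
      split_ifs at hd with h
      · simp at hd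
      · obtain ⟨b', hb', hle⟩ := hf d (by simpa using hd)
        rcases Finset.mem_insert.1 hb' with rfl | hb'
        · exact absurd hle h
        · exact ⟨b', hb', hle⟩
    have := u.map_add_lt h1 h2
    rwa [add_sub_cancel] at this

/-- Dickson's lemma: every set of exponents lies above a finite subset of itself. -/
lemma exists_finset_le {n : ℕ} (S : Set (Fin n →₀ ℕ)) :
    ∃ B : Finset (Fin n →₀ ℕ), (∀ b ∈ B, b ∈ S) ∧ ∀ d ∈ S, ∃ b ∈ B, b ≤ d := by
  have hfin : {d | Minimal (· ∈ S) d}.Finite :=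
    WellQuasiOrderedLE.finite_of_isAntichain (setOfPred_minimal_antichain _)
  refine ⟨hfin.toFinset, fun b hb => ((hfin.mem_toFinset).1 hb).prop, fun d hd => ?_⟩
  obtain ⟨b, hle, hb⟩ := exists_minimal_le_of_wellFoundedLT (· ∈ S) d hd
  exact ⟨b, hfin.mem_toFinset.2 hb, hle⟩

/-- Independence makes `d ↦ c ^ d` injective on exponents. -/
lemma prod_pow_injective {n : ℕ} (c : Fin n → NNReal) (hpos : ∀ i, 0 < c i)
    (hind : ∀ m : Fin n → ℤ, (∏ i, c i ^ m i) = 1 → m = 0) :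
    Function.Injective fun d : Fin n →₀ ℕ => ∏ i, c i ^ d i := by
  intro d e h
  have h0 := hind (fun i => (d i : ℤ) - e i) (by
    simp only [zpow_sub₀ (hpos _).ne', zpow_natCast, Finset.prod_div_distrib]
    rw [show (∏ i, c i ^ d i) = ∏ i, c i ^ e i from h]
    exact div_self (Finset.prod_ne_zero_iff.2 fun i _ => pow_ne_zero _ (hpos i).ne'))
  ext i
  have := congrFun h0 i
  simp only [Pi.zero_apply] at this
  omega

open MvPowerSeries in
/-- The value of a nonzero power series is `c ^ m` for an exponent `m` that depends only on the
series and on the values `c` of the variables, not on the valuation. -/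
lemma exists_valuation_eq {k : Type*} [Field k] {n : ℕ} (c : Fin n → NNReal)
    (hpos : ∀ i, 0 < c i) (hle : ∀ i, c i ≤ 1)
    (hind : ∀ m : Fin n → ℤ, (∏ i, c i ^ m i) = 1 → m = 0)
    (f : MvPowerSeries (Fin n) k) (hf : f ≠ 0) :
    ∃ m : Fin n →₀ ℕ, ∀ u : Valuation (MvPowerSeries (Fin n) k) NNReal,
      (∀ f, u f ≤ 1) → (∀ i, u (X i) = c i) → u f = ∏ i, c i ^ m i := by
  classical
  obtain ⟨B, hBS, hB⟩ := exists_finset_le {d | coeff d f ≠ 0}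
  obtain ⟨d₀, hd₀⟩ : ∃ d, coeff d f ≠ 0 := by
    by_contra! h
    exact hf (MvPowerSeries.ext (by simpa using h))
  obtain ⟨b₀, hb₀, -⟩ := hB d₀ hd₀
  obtain ⟨m, hm, hmax⟩ := B.exists_max_image (fun d => ∏ i, c i ^ d i) ⟨b₀, hb₀⟩
  have hlt : ∀ d, coeff d f ≠ 0 → d ≠ m → ∏ i, c i ^ d i < ∏ i, c i ^ m i := by
    intro d hd hdm
    obtain ⟨b, hb, hbd⟩ := hB d hd
    refine lt_of_le_of_ne (le_trans ?_ (hmax b hb))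
      fun h => hdm (prod_pow_injective c hpos hind h)
    exact Finset.prod_le_prod' fun i _ => pow_le_pow_of_le_one zero_le (hle i) (hbd i)
  refine ⟨m, fun u hu hX => ?_⟩
  have hmon : ∀ d, u (monomial d 1) = ∏ i, c i ^ d i := fun d => by
    simp only [valuation_monomial_one, hX]
  have hlead : u (monomial m (coeff m f)) = ∏ i, c i ^ m i := by
    have : monomial m (coeff m f) = C (coeff m f) * monomial m (1 : k) := by
      rw [← monomial_zero_eq_C_apply, monomial_mul_monomial, zero_add, mul_one]
    rw [this, map_mul, valuation_C u hu (hBS m hm), one_mul, hmon]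
  obtain ⟨B', hBS', hB'⟩ := exists_finset_le {d | coeff d f ≠ 0 ∧ d ≠ m}
  have hrest : u (f - monomial m (coeff m f)) < u (monomial m (coeff m f)) := by
    refine valuation_lt_of_forall_le u hu ?_ B' (fun b hb => ?_) _ fun d hd => hB' d ?_
    · rw [hlead]
      exact Finset.prod_pos fun i _ => pow_pos (hpos i) _
    · rw [hlead, hmon]
      exact hlt b (hBS' b hb).1 (hBS' b hb).2
    · rw [map_sub, coeff_monomial] at hd
      by_cases h : d = m
      · simp [h] at hd
      · exact ⟨by simpa [h] using hd, h⟩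
  have := u.map_add_eq_of_lt_left hrest
  rwa [add_sub_cancel, hlead] at this

/-- Uniqueness of the monomial valuation: two valuations on the fraction field of
`k[[x₁,…,xₙ]]` which are at most `1` on power series and agree on the variables, with
common values `0 < cᵢ < 1` multiplicatively rationally independent, are equal. -/
theorem stmt_7 {k : Type*} [Field k] (n : ℕ) (hn : 1 ≤ n)
    (v w : Valuation (FractionRing (MvPowerSeries (Fin n) k)) NNReal)
    (hv : ∀ f : MvPowerSeries (Fin n) k,
      v (algebraMap (MvPowerSeries (Fin n) k) (FractionRing (MvPowerSeries (Fin n) k)) f) ≤ 1)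
    (hw : ∀ f : MvPowerSeries (Fin n) k,
      w (algebraMap (MvPowerSeries (Fin n) k) (FractionRing (MvPowerSeries (Fin n) k)) f) ≤ 1)
    (hvw : ∀ i : Fin n,
      v (algebraMap (MvPowerSeries (Fin n) k) (FractionRing (MvPowerSeries (Fin n) k))
          (MvPowerSeries.X i)) =
        w (algebraMap (MvPowerSeries (Fin n) k) (FractionRing (MvPowerSeries (Fin n) k))
          (MvPowerSeries.X i)))
    (hpos : ∀ i : Fin n, 0 <
      v (algebraMap (MvPowerSeries (Fin n) k) (FractionRing (MvPowerSeries (Fin n) k))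
          (MvPowerSeries.X i)))
    (hlt : ∀ i : Fin n,
      v (algebraMap (MvPowerSeries (Fin n) k) (FractionRing (MvPowerSeries (Fin n) k))
          (MvPowerSeries.X i)) < 1)
    (hind : ∀ m : Fin n → ℤ,
      (∏ i, v (algebraMap (MvPowerSeries (Fin n) k) (FractionRing (MvPowerSeries (Fin n) k))
          (MvPowerSeries.X i)) ^ m i) = 1 → m = 0) :
    v = w := by
  have key : ∀ f : MvPowerSeries (Fin n) k,
      v (algebraMap _ (FractionRing (MvPowerSeries (Fin n) k)) f) =
        w (algebraMap _ (FractionRing (MvPowerSeries (Fin n) k)) f) := by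
    intro f
    rcases eq_or_ne f 0 with rfl | hf
    · simp
    obtain ⟨m, hm⟩ := exists_valuation_eq _ hpos (fun i => (hlt i).le) hind f hf
    exact (hm (v.comap (algebraMap _ _)) hv fun _ => rfl).trans
      (hm (w.comap (algebraMap _ _)) hw fun i => (hvw i).symm).symm
  ext x
  obtain ⟨f, g, -, rfl⟩ := IsFractionRing.div_surjective (A := MvPowerSeries (Fin n) k) x
  rw [map_div₀, map_div₀, key, key]
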